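/- If the function V(m) belongs to the class 𝒱 and a is any real number, then the function m ↦ V(m) + a·m also belongs to 𝒱. Moreover, if V belongs to 𝒱∞, then m ↦ V(m) + a·m also belongs to 𝒱∞. -/

import Mathlib

open MeasureTheory Filter

noncomputable section

/-- The Cauchy–Stieltjes kernel density `f(x,m) = V(m)/(V(m)+m(m-x))`. -/
def cskKernel (V : ℝ → ℝ) (m x : ℝ) : ℝ := V m / (V m + m * (m - x))

/-- `ν` is a non-degenerate, compactly supported probability measure on `ℝ` with mean `0`. -/
def IsCSKGenerator (ν : Measure ℝ) : Prop :=
  IsProbabilityMeasure ν ∧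
  (∃ R : ℝ, ν (Set.Icc (-R) R)ᶜ = 0) ∧
  (∀ a : ℝ, ν ≠ Measure.dirac a) ∧
  (∫ x, x ∂ν) = 0

/-- `V` is the variance function of the CSK family generated by `ν`:
`V` is real-analytic near `0`, `V 0 > 0`, and for all `m` near `0` the kernel
`f(x,m)` is a.e. nonnegative, integrates to `1`, and has mean `m`. -/
def IsCSKVarianceFun (ν : Measure ℝ) (V : ℝ → ℝ) : Prop :=
  AnalyticAt ℝ V 0 ∧ 0 < V 0 ∧
  ∃ ε > 0, ∀ m : ℝ, |m| < ε →
    (∀ᵐ x ∂ν, 0 ≤ cskKernel V m x) ∧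
    (∫ x, cskKernel V m x ∂ν) = 1 ∧
    (∫ x, x * cskKernel V m x ∂ν) = m

/-- The class `𝒱` of variance functions of CSK families generated by
non-degenerate compactly supported probability measures with mean `0` and variance `1`. -/
def memV (V : ℝ → ℝ) : Prop :=
  ∃ ν : Measure ℝ, IsCSKGenerator ν ∧ (∫ x, x ^ 2 ∂ν) = 1 ∧ IsCSKVarianceFun ν V

/-- The class `𝒱∞`: those `V` such that `m ↦ V (c * m)` is in `𝒱` for every real `c`. -/
def memVinf (V : ℝ → ℝ) : Prop := ∀ c : ℝ, memV (fun m => V (c * m))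

open scoped ENNReal InnerProductSpace Topology CompactlySupported

/-!
Let `X` be multiplication by `x` on `L²(ν)` and `e = 1`, so that `ν` is the spectral measure of `X`
at `e`. The member of the CSK family with mean `m` has a density `u` with
`(V m + m²) u - m X u = V m e`, `⟪e, u⟫ = 1` and `⟪e, X u⟫ = m`. The same `u` solves these three
equations for `V m + a m` and `X + a P`, where `P` is the orthogonal projection onto the complement
of `e`. Hence `V m + a m` is the variance function of the family generated by the spectral measure
of `X + a P` at `e`, whose mean and variance are those of `ν`.
-/

section CompactlySupportedMeasure

theorem memLp_of_continuousOn_isCompact {X E : Type*} [TopologicalSpace X] [T2Space X]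
    [MeasurableSpace X] [OpensMeasurableSpace X] [TopologicalSpace.PseudoMetrizableSpace X]
    [NormedAddCommGroup E] {μ : Measure X} [IsFiniteMeasure μ] {K : Set X} (hK : IsCompact K)
    (hμK : ∀ᵐ x ∂μ, x ∈ K) {f : X → E} (hf : ContinuousOn f K) (p : ℝ≥0∞) : MemLp f p μ := by
  obtain ⟨C, hC⟩ := hK.exists_bound_of_continuousOn hf
  have hmeas : AEStronglyMeasurable f (μ.restrict K) :=
    hf.aestronglyMeasurable_of_isCompact hK hK.measurableSet
  rw [Measure.restrict_eq_self_of_ae_mem hμK] at hmeas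
  exact .of_bound hmeas C (hμK.mono hC)

variable {ν : Measure ℝ}

theorem memLp_id_top_iff : MemLp id ∞ ν ↔ ∃ R : ℝ, ∀ᵐ x ∂ν, x ∈ Set.Icc (-R) R := by
  constructor
  · intro hν
    refine ⟨(eLpNorm id ∞ ν).toReal, ?_⟩
    filter_upwards [ae_le_eLpNormEssSup (f := id) (μ := ν)] with x hx
    rw [Set.mem_Icc, ← abs_le, ← Real.norm_eq_abs, ← toReal_enorm]
    exact ENNReal.toReal_mono hν.eLpNorm_ne_top (by simpa using hx)
  · rintro ⟨R, hR⟩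
    exact memLp_top_of_bound aestronglyMeasurable_id R (hR.mono fun x hx ↦ abs_le.2 hx)

theorem exists_eq_dirac_iff_variance_eq_zero [IsProbabilityMeasure ν] (hν : MemLp id 2 ν) :
    (∃ a, ν = Measure.dirac a) ↔ ProbabilityTheory.variance id ν = 0 := by
  constructor
  · rintro ⟨a, rfl⟩
    simp
  · intro hvar
    refine ⟨∫ x, x ∂ν, ?_⟩
    calc ν = ν.map id := Measure.map_id.symm
      _ = ν.map fun _ ↦ ∫ x, x ∂ν :=
        Measure.map_congr (ProbabilityTheory.ae_eq_integral_of_variance_eq_zero hν hvar)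
      _ = Measure.dirac (∫ x, x ∂ν) := by simp [Measure.map_const]

theorem isCSKGenerator_iff : IsCSKGenerator ν ↔
    IsProbabilityMeasure ν ∧ MemLp id ∞ ν ∧ (∫ x, x ∂ν) = 0 ∧ (∫ x, x ^ 2 ∂ν) ≠ 0 := by
  have hdirac [IsProbabilityMeasure ν] (hν : MemLp id ∞ ν) (hmean : ∫ x, x ∂ν = 0) :
      (∀ a, ν ≠ Measure.dirac a) ↔ (∫ x, x ^ 2 ∂ν) ≠ 0 := by
    rw [← not_exists, exists_eq_dirac_iff_variance_eq_zero (hν.mono_exponent le_top),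
      ProbabilityTheory.variance_of_integral_eq_zero aemeasurable_id hmean]
    simp
  rw [IsCSKGenerator, memLp_id_top_iff]
  constructor
  · rintro ⟨hprob, hsupp, hne, hmean⟩
    exact ⟨hprob, hsupp, hmean, (hdirac (memLp_id_top_iff.2 hsupp) hmean).1 hne⟩
  · rintro ⟨hprob, hsupp, hmean, hvar⟩
    exact ⟨hprob, hsupp, (hdirac (memLp_id_top_iff.2 hsupp) hmean).2 hvar, hmean⟩

end CompactlySupportedMeasure

section MultiplicationOperator

variable {α : Type*} {mα : MeasurableSpace α} {μ : Measure α}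

/-- A real square-integrable function as an element of the complex Hilbert space `L²(μ)`. -/
def realToL2 {g : α → ℝ} (hg : MemLp g 2 μ) : Lp ℂ 2 μ :=
  (hg.ofReal (K := ℂ)).toLp

theorem coeFn_realToL2 {g : α → ℝ} (hg : MemLp g 2 μ) : realToL2 hg =ᵐ[μ] fun x ↦ (g x : ℂ) :=
  MemLp.coeFn_toLp _

theorem inner_realToL2 {g h : α → ℝ} (hg : MemLp g 2 μ) (hh : MemLp h 2 μ) :
    ⟪realToL2 hg, realToL2 hh⟫_ℂ = (∫ x, g x * h x ∂μ : ℝ) := by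
  rw [L2.inner_def, ← integral_complex_ofReal]
  refine integral_congr_ae ?_
  filter_upwards [coeFn_realToL2 hg, coeFn_realToL2 hh] with x hgx hhx
  simp [hgx, hhx, mul_comm]

theorem norm_realToL2_sq {g : α → ℝ} (hg : MemLp g 2 μ) :
    ‖realToL2 hg‖ ^ 2 = ∫ x, g x ^ 2 ∂μ := by
  rw [← inner_self_eq_norm_sq (𝕜 := ℂ), inner_realToL2]
  simp [pow_two]

/-- Multiplication by an essentially bounded real function, as an operator on `L²(μ)`. -/
def mulOperator {φ : α → ℝ} (hφ : MemLp φ ∞ μ) : Lp ℂ 2 μ →L[ℂ] Lp ℂ 2 μ :=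
  (ContinuousLinearMap.mul ℂ ℂ).holderL μ ∞ 2 2 (hφ.ofReal (K := ℂ)).toLp

variable {φ : α → ℝ} (hφ : MemLp φ ∞ μ)

theorem coeFn_mulOperator (u : Lp ℂ 2 μ) : mulOperator hφ u =ᵐ[μ] fun x ↦ φ x * u x := by
  filter_upwards [(ContinuousLinearMap.mul ℂ ℂ).coeFn_holder (r := 2) (hφ.ofReal (K := ℂ)).toLp u,
    (hφ.ofReal (K := ℂ)).coeFn_toLp] with x hmul hx
  rw [hx] at hmul
  exact hmul

theorem isSelfAdjoint_mulOperator : IsSelfAdjoint (mulOperator hφ) := by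
  refine ContinuousLinearMap.isSelfAdjoint_iff_isSymmetric.2 fun u v ↦ ?_
  simp only [ContinuousLinearMap.coe_coe, L2.inner_def]
  refine integral_congr_ae ?_
  filter_upwards [coeFn_mulOperator hφ u, coeFn_mulOperator hφ v] with x hux hvx
  rw [hux, hvx]
  simp only [RCLike.inner_apply, map_mul, Complex.conj_ofReal]
  ring

theorem mulOperator_realToL2 {g : α → ℝ} (hg : MemLp g 2 μ) :
    mulOperator hφ (realToL2 hg) = realToL2 (hg.mul' hφ) := by
  refine Lp.ext ?_
  filter_upwards [coeFn_mulOperator hφ (realToL2 hg), coeFn_realToL2 hg,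
    coeFn_realToL2 (hg.mul' hφ)] with x hmul hgx hφgx
  rw [hmul, hgx, hφgx, Complex.ofReal_mul]

end MultiplicationOperator

section SpectralMeasure

variable {H : Type*} [NormedAddCommGroup H] [InnerProductSpace ℂ H] [CompleteSpace H]
  {T : H →L[ℂ] H}

/-- The positive functional `f ↦ Re ⟪e, f(T) e⟫` on the continuous functions on the spectrum of a
self-adjoint operator `T`. As the spectrum is compact, these are the compactly supported ones. -/
def spectralFunctional (hT : IsSelfAdjoint T) (e : H) : C_c(spectrum ℝ T, ℝ) →ₚ[ℝ] ℝ :=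
  .mk₀
    { toFun f := (⟪e, cfcHom hT (f : C(spectrum ℝ T, ℝ)) e⟫_ℂ).re
      map_add' f g := by
        have hfg : ((f + g : C_c(spectrum ℝ T, ℝ)) : C(spectrum ℝ T, ℝ)) = f + g := rfl
        rw [hfg, map_add, add_apply, inner_add_right, Complex.add_re]
      map_smul' c f := by
        have hcf : ((c • f : C_c(spectrum ℝ T, ℝ)) : C(spectrum ℝ T, ℝ)) =
            c • (f : C(spectrum ℝ T, ℝ)) := rfl
        rw [hcf, map_smul]
        simp [inner_smul_right_eq_smul] }
    fun f hf ↦ by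
      have hpos : (0 : H →L[ℂ] H) ≤ cfcHom hT (f : C(spectrum ℝ T, ℝ)) :=
        (cfcHom_nonneg_iff hT).2 hf
      exact ((ContinuousLinearMap.nonneg_iff_isPositive _).1 hpos).re_inner_nonneg_right e

/-- The spectral measure of a self-adjoint operator `T` at a vector `e`: the measure `μ` on `ℝ`
with `∫ f dμ = Re ⟪e, f(T) e⟫` for `f` continuous on the spectrum of `T`. -/
def spectralMeasure (hT : IsSelfAdjoint T) (e : H) : Measure ℝ :=
  (RealRMK.rieszMeasure (spectralFunctional hT e)).map (↑)

variable (hT : IsSelfAdjoint T) (e : H)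

theorem ae_mem_spectrum_spectralMeasure : ∀ᵐ x ∂spectralMeasure hT e, x ∈ spectrum ℝ T :=
  (MeasurableEmbedding.subtype_coe (spectrum.isCompact T).measurableSet).ae_map_iff.2
    (ae_of_all _ Subtype.property)

theorem integral_spectralMeasure {f : ℝ → ℝ} (hf : ContinuousOn f (spectrum ℝ T)) :
    ∫ x, f x ∂spectralMeasure hT e = (⟪e, cfc f T e⟫_ℂ).re := by
  let g : C_c(spectrum ℝ T, ℝ) := .continuousMapEquiv ⟨_, hf.domRestrict⟩
  calc ∫ x, f x ∂spectralMeasure hT e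
      = ∫ x, g x ∂(RealRMK.rieszMeasure (spectralFunctional hT e)) :=
        (MeasurableEmbedding.subtype_coe (spectrum.isCompact T).measurableSet).integral_map f
    _ = spectralFunctional hT e g := RealRMK.integral_rieszMeasure _ g
    _ = (⟪e, cfc f T e⟫_ℂ).re := by rw [cfc_apply f T hT hf]; rfl

theorem measureReal_univ_spectralMeasure : (spectralMeasure hT e).real Set.univ = ‖e‖ ^ 2 := by
  have h := integral_spectralMeasure hT e (continuousOn_const (c := 1))
  rw [cfc_const_one ℝ T] at h
  simpa [← inner_self_eq_norm_sq (𝕜 := ℂ)] using h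

theorem integral_id_spectralMeasure : ∫ x, x ∂spectralMeasure hT e = (⟪e, T e⟫_ℂ).re := by
  rw [integral_spectralMeasure hT e (by fun_prop), cfc_id' ℝ T]

theorem integral_sq_spectralMeasure : ∫ x, x ^ 2 ∂spectralMeasure hT e = ‖T e‖ ^ 2 := by
  rw [integral_spectralMeasure hT e (by fun_prop), cfc_pow_id T 2, pow_two,
    mul_apply_eq_comp, ← hT.isSymmetric.apply_clm, ← inner_self_eq_norm_sq (𝕜 := ℂ)]
  rfl

end SpectralMeasure

section OrthogonalShift

variable {H : Type*} [NormedAddCommGroup H] [InnerProductSpace ℂ H]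

/-- For a unit vector `e`, the operator `T + a P`, where `P` is the orthogonal projection onto the
orthogonal complement of `e`. -/
def orthogonalShift (T : H →L[ℂ] H) (e : H) (a : ℝ) : H →L[ℂ] H :=
  T + (a : ℂ) • (1 - InnerProductSpace.rankOne ℂ e e)

theorem orthogonalShift_apply (T : H →L[ℂ] H) (e : H) (a : ℝ) (u : H) :
    orthogonalShift T e a u = T u + (a : ℂ) • (u - ⟪e, u⟫_ℂ • e) := by
  simp [orthogonalShift]

theorem isSelfAdjoint_orthogonalShift [CompleteSpace H] {T : H →L[ℂ] H} (hT : IsSelfAdjoint T)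
    (e : H) (a : ℝ) : IsSelfAdjoint (orthogonalShift T e a) :=
  hT.add (.smul (Complex.conj_ofReal a)
    ((IsSelfAdjoint.one _).sub (InnerProductSpace.isPositive_rankOne_self e).isSelfAdjoint))

variable {e : H} (he : ‖e‖ = 1) (T : H →L[ℂ] H) (a : ℝ)
include he

theorem orthogonalShift_apply_self : orthogonalShift T e a e = T e := by
  simp [orthogonalShift_apply, inner_self_eq_norm_sq_to_K, he]

theorem inner_orthogonalShift_apply (u : H) :
    ⟪e, orthogonalShift T e a u⟫_ℂ = ⟪e, T u⟫_ℂ := by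
  simp [orthogonalShift_apply, inner_self_eq_norm_sq_to_K, he]

end OrthogonalShift

section Kernel

variable {V : ℝ → ℝ} {K : Set ℝ}

theorem continuousOn_cskKernel {m : ℝ} (hK : ∀ x ∈ K, 0 < V m + m * (m - x)) :
    ContinuousOn (cskKernel V m) K :=
  .div (by fun_prop) (by fun_prop) fun x hx ↦ (hK x hx).ne'

theorem eventually_forall_cskKernel_denom_pos (hK : IsCompact K)
    (hV : ContinuousAt V 0) (hV0 : 0 < V 0) :
    ∀ᶠ m in 𝓝 0, ∀ x ∈ K, 0 < V m + m * (m - x) := by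
  refine hK.eventually_forall_of_forall_eventually fun x _ ↦ ?_
  have hcont : ContinuousAt (fun p : ℝ × ℝ ↦ V p.1 + p.1 * (p.1 - p.2)) (0, x) :=
    (hV.comp (f := Prod.fst) continuousAt_fst).add (by fun_prop)
  exact hcont.eventually (lt_mem_nhds (by simpa using hV0))

end Kernel

section CSKVector

variable {H : Type*} [NormedAddCommGroup H] [InnerProductSpace ℂ H]

/-- The Hilbert space form of membership in a CSK family. If `T` is multiplication by `x` on
`L²(ν)` and `e = 1`, then `u` is the density `v / (v + m (m - x))` of the member with mean `m`,
where `v` is the value of the variance function at `m`. -/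
structure IsCSKVector (T : H →L[ℂ] H) (e : H) (v m : ℝ) (u : H) : Prop where
  inner_eq_one : ⟪e, u⟫_ℂ = 1
  inner_apply_eq : ⟪e, T u⟫_ℂ = m
  resolvent_eq : ((v + m ^ 2 : ℝ) : ℂ) • u - (m : ℂ) • T u = (v : ℂ) • e

/-- The vector `u` does not change: replacing `v` by `v + a m` and `T u` by
`T u + a (u - e)` alters both sides of the resolvent equation by `a m e`. -/
theorem IsCSKVector.orthogonalShift {T : H →L[ℂ] H} {e u : H} {v m : ℝ} (he : ‖e‖ = 1)
    (hu : IsCSKVector T e v m u) (a : ℝ) :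
    IsCSKVector (orthogonalShift T e a) e (v + a * m) m u where
  inner_eq_one := hu.inner_eq_one
  inner_apply_eq := by rw [inner_orthogonalShift_apply he, hu.inner_apply_eq]
  resolvent_eq := by
    have hres := hu.resolvent_eq
    rw [orthogonalShift_apply, hu.inner_eq_one]
    push_cast at hres ⊢
    linear_combination (norm := module) hres

variable [CompleteSpace H] {T : H →L[ℂ] H} {e u : H} {V : ℝ → ℝ} {m : ℝ}

theorem IsCSKVector.cfc_cskKernel_apply (hT : IsSelfAdjoint T) (hu : IsCSKVector T e (V m) m u)
    (hV : V m ≠ 0) (hpos : ∀ x ∈ spectrum ℝ T, 0 < V m + m * (m - x)) :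
    cfc (cskKernel V m) T e = u := by
  have hden : cfc (fun x ↦ V m + m ^ 2 - m * x) T u = (V m : ℂ) • e := by
    rw [cfc_sub (fun _ ↦ V m + m ^ 2) (fun x ↦ m * x) T, cfc_const _ T, cfc_const_mul_id m T,
      ← hu.resolvent_eq, Complex.coe_smul, Complex.coe_smul]
    simp [Algebra.algebraMap_eq_smul_one]
  have hmul : cfc (cskKernel V m) T * cfc (fun x ↦ V m + m ^ 2 - m * x) T
      = algebraMap ℝ _ (V m) := by
    rw [← cfc_mul _ _ T (continuousOn_cskKernel hpos) (by fun_prop), ← cfc_const (V m) T]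
    refine cfc_congr fun x hx ↦ ?_
    rw [show V m + m ^ 2 - m * x = V m + m * (m - x) by ring]
    exact div_mul_cancel₀ _ (hpos x hx).ne'
  have happly : (V m : ℂ) • cfc (cskKernel V m) T e = (V m : ℂ) • u := by
    rw [← map_smul, ← hden, ← mul_apply_eq_comp, hmul]
    simp [Algebra.algebraMap_eq_smul_one]
  exact smul_right_injective _ (by exact_mod_cast hV) happly

theorem IsCSKVector.integral_cskKernel (hT : IsSelfAdjoint T) (hu : IsCSKVector T e (V m) m u)
    (hV : V m ≠ 0) (hpos : ∀ x ∈ spectrum ℝ T, 0 < V m + m * (m - x)) :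
    ∫ x, cskKernel V m x ∂spectralMeasure hT e = 1 := by
  rw [integral_spectralMeasure hT e (continuousOn_cskKernel hpos),
    hu.cfc_cskKernel_apply hT hV hpos, hu.inner_eq_one, Complex.one_re]

theorem IsCSKVector.integral_mul_cskKernel (hT : IsSelfAdjoint T)
    (hu : IsCSKVector T e (V m) m u) (hV : V m ≠ 0)
    (hpos : ∀ x ∈ spectrum ℝ T, 0 < V m + m * (m - x)) :
    ∫ x, x * cskKernel V m x ∂spectralMeasure hT e = m := by
  have hker := continuousOn_cskKernel hpos
  rw [integral_spectralMeasure hT e (by fun_prop), cfc_mul _ _ T (by fun_prop) hker,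
    cfc_id' ℝ T, mul_apply_eq_comp, hu.cfc_cskKernel_apply hT hV hpos, hu.inner_apply_eq,
    Complex.ofReal_re]

end CSKVector

section MultiplicationRealization

variable {ν : Measure ℝ} [IsFiniteMeasure ν] (hν : MemLp id ∞ ν) {V : ℝ → ℝ}

theorem isCSKVector_realToL2_cskKernel {m : ℝ} (hker : MemLp (cskKernel V m) 2 ν)
    (hden : ∀ᵐ x ∂ν, V m + m * (m - x) ≠ 0) (hmass : ∫ x, cskKernel V m x ∂ν = 1)
    (hmean : ∫ x, x * cskKernel V m x ∂ν = m) :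
    IsCSKVector (mulOperator hν) (realToL2 (memLp_const 1)) (V m) m (realToL2 hker) where
  inner_eq_one := by simp [inner_realToL2, hmass]
  inner_apply_eq := by simp [mulOperator_realToL2, inner_realToL2, hmean]
  resolvent_eq := by
    rw [mulOperator_realToL2]
    simp only [realToL2, ← MemLp.toLp_const_smul, ← MemLp.toLp_sub, MemLp.toLp_eq_toLp_iff]
    filter_upwards [hden] with x hx
    have hkx : (cskKernel V m x : ℂ) * (V m + m * (m - x)) = V m := by
      exact_mod_cast div_mul_cancel₀ (V m) hx
    simp only [Pi.sub_apply, Pi.smul_apply, smul_eq_mul, id]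
    push_cast
    linear_combination hkx

theorem IsCSKVarianceFun.eventually_exists_isCSKVector (hV : IsCSKVarianceFun ν V) :
    ∀ᶠ m in 𝓝 0,
      ∃ u, IsCSKVector (mulOperator hν) (realToL2 (memLp_const 1)) (V m) m u := by
  obtain ⟨han, hV0, ε, hε, hfam⟩ := hV
  obtain ⟨R, hR⟩ := memLp_id_top_iff.1 hν
  filter_upwards [Metric.ball_mem_nhds 0 hε,
    eventually_forall_cskKernel_denom_pos isCompact_Icc han.continuousAt hV0] with m hm hpos
  obtain ⟨-, hmass, hmean⟩ := hfam m (by simpa using hm)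
  have hker := memLp_of_continuousOn_isCompact isCompact_Icc hR (continuousOn_cskKernel hpos) 2
  have hden : ∀ᵐ x ∂ν, V m + m * (m - x) ≠ 0 := hR.mono fun x hx ↦ (hpos x hx).ne'
  exact ⟨_, isCSKVector_realToL2_cskKernel hν hker hden hmass hmean⟩

end MultiplicationRealization

section SpectralRealization

variable {H : Type*} [NormedAddCommGroup H] [InnerProductSpace ℂ H] [CompleteSpace H]
  {T : H →L[ℂ] H} (hT : IsSelfAdjoint T) {e : H}
include hT

theorem isCSKGenerator_spectralMeasure (he : ‖e‖ = 1) (hmean : ⟪e, T e⟫_ℂ = 0) (hTe : T e ≠ 0) :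
    IsCSKGenerator (spectralMeasure hT e) := by
  have hprob : IsProbabilityMeasure (spectralMeasure hT e) := by
    rw [isProbabilityMeasure_iff_real, measureReal_univ_spectralMeasure, he, one_pow]
  refine isCSKGenerator_iff.2 ⟨hprob, ?_, ?_, ?_⟩
  · exact memLp_of_continuousOn_isCompact (spectrum.isCompact T)
      (ae_mem_spectrum_spectralMeasure hT e) continuousOn_id ∞
  · rw [integral_id_spectralMeasure, hmean, Complex.zero_re]
  · simpa [integral_sq_spectralMeasure] using hTe

theorem isCSKVarianceFun_spectralMeasure {V : ℝ → ℝ} (hV : AnalyticAt ℝ V 0) (hV0 : 0 < V 0)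
    (hvec : ∀ᶠ m in 𝓝 0, ∃ u, IsCSKVector T e (V m) m u) :
    IsCSKVarianceFun (spectralMeasure hT e) V := by
  have hden := eventually_forall_cskKernel_denom_pos (spectrum.isCompact T) hV.continuousAt hV0
  have hVpos : ∀ᶠ m in 𝓝 0, 0 < V m := hV.continuousAt.eventually (lt_mem_nhds hV0)
  obtain ⟨ε, hε, hball⟩ := Metric.eventually_nhds_iff.1 (hvec.and (hden.and hVpos))
  refine ⟨hV, hV0, ε, hε, fun m hm ↦ ?_⟩
  obtain ⟨⟨u, hu⟩, hpos, hVm⟩ := hball (by simpa using hm : dist m 0 < ε)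
  refine ⟨?_, hu.integral_cskKernel hT hVm.ne' hpos, hu.integral_mul_cskKernel hT hVm.ne' hpos⟩
  filter_upwards [ae_mem_spectrum_spectralMeasure hT e] with x hx
  exact div_nonneg hVm.le (hpos x hx).le

end SpectralRealization

theorem IsCSKVarianceFun.exists_add_linear {ν : Measure ℝ} {V : ℝ → ℝ} (hν : IsCSKGenerator ν)
    (hV : IsCSKVarianceFun ν V) (a : ℝ) :
    ∃ μ, IsCSKGenerator μ ∧ (∫ x, x ^ 2 ∂μ) = (∫ x, x ^ 2 ∂ν) ∧
      IsCSKVarianceFun μ (fun m ↦ V m + a * m) := by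
  obtain ⟨hprob, hbdd, hmean, hsq⟩ := isCSKGenerator_iff.1 hν
  let X := mulOperator hbdd
  let e : Lp ℂ 2 ν := realToL2 (memLp_const 1)
  have he : ‖e‖ = 1 := by
    rw [← pow_eq_one_iff_of_nonneg (norm_nonneg e) two_ne_zero]
    simp [e, norm_realToL2_sq]
  have hXe : ⟪e, X e⟫_ℂ = 0 := by simp [X, e, mulOperator_realToL2, inner_realToL2, hmean]
  have hXe_sq : ‖X e‖ ^ 2 = ∫ x, x ^ 2 ∂ν := by
    simp [X, e, mulOperator_realToL2, norm_realToL2_sq]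
  have hT : IsSelfAdjoint (orthogonalShift X e a) :=
    isSelfAdjoint_orthogonalShift (isSelfAdjoint_mulOperator hbdd) e a
  refine ⟨spectralMeasure hT e, isCSKGenerator_spectralMeasure hT he ?_ ?_, ?_,
    isCSKVarianceFun_spectralMeasure hT (hV.1.add (by fun_prop)) (by simpa using hV.2.1) ?_⟩
  · rwa [orthogonalShift_apply_self he]
  · rw [orthogonalShift_apply_self he, ← norm_ne_zero_iff]
    exact pow_ne_zero_iff two_ne_zero |>.1 (hXe_sq ▸ hsq)
  · rw [integral_sq_spectralMeasure, orthogonalShift_apply_self he, hXe_sq]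
  · filter_upwards [hV.eventually_exists_isCSKVector hbdd] with m ⟨u, hu⟩
    exact ⟨u, hu.orthogonalShift he a⟩

theorem memV.add_linear {V : ℝ → ℝ} (hV : memV V) (a : ℝ) : memV (fun m ↦ V m + a * m) := by
  obtain ⟨ν, hν, hsq, hνV⟩ := hV
  obtain ⟨μ, hμ, hμsq, hμV⟩ := hνV.exists_add_linear hν a
  exact ⟨μ, hμ, hμsq.trans hsq, hμV⟩

/-- If `V ∈ 𝒱` then `m ↦ V(m) + a·m ∈ 𝒱`; moreover if `V ∈ 𝒱∞` then
`m ↦ V(m) + a·m ∈ 𝒱∞`. -/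
theorem memV_add_linear (V : ℝ → ℝ) (a : ℝ) :
    (memV V → memV (fun m => V m + a * m)) ∧
    (memVinf V → memVinf (fun m => V m + a * m)) := by
  refine ⟨fun hV ↦ hV.add_linear a, fun hV c ↦ ?_⟩
  simpa only [mul_assoc] using (hV c).add_linear (a * c)
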